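/- Let D be a strong digraph of order n ≥ 2. If every vertex x of D satisfies d(x) ≥ n, then D is Hamiltonian. -/

import Mathlib

/-! A digraph on a vertex type `V` is given by its arc relation `A : V → V → Prop`
(this automatically forbids multiple arcs); looplessness is expressed by the
hypothesis `Irreflexive A`. -/

/-- The degree of `x`: its out-degree plus its in-degree. -/
noncomputable def degree {V : Type*} (A : V → V → Prop) (x : V) : ℕ :=
  {y | A x y}.ncard + {y | A y x}.ncard

/-- `degreeIn A x S` is the number of arcs between `x` and vertices of `S`,
in both directions. -/
noncomputable def degreeIn {V : Type*} (A : V → V → Prop) (x : V) (S : Set V) : ℕ :=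
  {y ∈ S | A x y}.ncard + {y ∈ S | A y x}.ncard

/-- `c : Fin m → V` is a directed cycle of length `m` (indices taken mod `m`). -/
def IsCycle {V : Type*} (A : V → V → Prop) {m : ℕ} (c : Fin m → V) : Prop :=
  2 ≤ m ∧ Function.Injective c ∧
    ∀ i : Fin m, A (c i) (c ⟨(i.val + 1) % m, Nat.mod_lt _ i.pos⟩)

/-- `p : Fin m → V` is a directed path on `m` vertices (of length `m - 1`). -/
def IsPath {V : Type*} (A : V → V → Prop) {m : ℕ} (p : Fin m → V) : Prop :=
  Function.Injective p ∧ ∀ (i : Fin m) (h : i.val + 1 < m), A (p i) (p ⟨i.val + 1, h⟩)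

/-- A digraph is Hamiltonian if it has a directed cycle through all of its vertices. -/
def IsHamiltonian {V : Type*} [Fintype V] (A : V → V → Prop) : Prop :=
  ∃ c : Fin (Fintype.card V) → V, IsCycle A c ∧ Function.Surjective c

/-- Reachability by a directed path staying inside the set `S`. -/
def ReachIn {V : Type*} (A : V → V → Prop) (S : Set V) : V → V → Prop :=
  Relation.ReflTransGen (fun u v => u ∈ S ∧ v ∈ S ∧ A u v)

/-- A digraph is strong if every vertex is reachable from every other by a directed path. -/
def IsStrong {V : Type*} (A : V → V → Prop) : Prop :=
  ∀ x y : V, Relation.ReflTransGen A x y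

/-- A digraph is `k`-strong if it has at least `k + 1` vertices and the deletion of
any set of at most `k - 1` vertices leaves a strong digraph. -/
def IsKStrong {V : Type*} [Fintype V] (A : V → V → Prop) (k : ℕ) : Prop :=
  k + 1 ≤ Fintype.card V ∧
    ∀ S : Set V, S.ncard ≤ k - 1 → ∀ x ∈ Sᶜ, ∀ y ∈ Sᶜ, ReachIn A Sᶜ x y

/-- The number of arcs between `x` and `w`, in both directions. -/
noncomputable def arcCount {V : Type*} (A : V → V → Prop) (x w : V) : ℕ :=
  open Classical in (if A x w then 1 else 0) + (if A w x then 1 else 0)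

/-- There is a walk from `u` to `v` with nonempty interior, all of it outside `S`. -/
def Detour {V : Type*} (A : V → V → Prop) (S : Set V) (u v : V) : Prop :=
  ∃ a b, a ∉ S ∧ A u a ∧ ReachIn A Sᶜ a b ∧ A b v

/-- `c` lists the vertices of a directed cycle in cyclic order; a single vertex is allowed. -/
def IsCycleList {V : Type*} (A : V → V → Prop) (c : List V) : Prop :=
  c.Nodup ∧ (c.length = 1 ∨ Cycle.Chain A (c : Cycle V))

section GhouilaHouri

variable {V : Type*} {A : V → V → Prop}

lemma arcCount_le_two (x w : V) : arcCount A x w ≤ 2 := by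
  unfold arcCount; split_ifs <;> omega

lemma arcCount_eq_zero {x w : V} (h : ¬ A x w) (h' : ¬ A w x) : arcCount A x w = 0 := by
  simp [arcCount, h, h']

lemma arcCount_add_le_two {a y w : V} (h : ¬ (A a w ∧ A w y)) (h' : ¬ (A y w ∧ A w a)) :
    arcCount A a w + arcCount A y w ≤ 2 := by
  unfold arcCount; split_ifs <;> simp_all

lemma degree_eq_sum_arcCount [Fintype V] (x : V) : degree A x = ∑ w, arcCount A x w := by
  classical
  simp [degree, arcCount, Finset.sum_add_distrib, Set.ncard_eq_toFinset_card']

/-- A vertex that cannot be inserted into a path on `k` vertices is joined to it by at most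
`k + 1` arcs. -/
lemma sum_arcCount_le_of_not_insertable {x : V} {l : List V}
    (h : l.IsChain fun p q => ¬ (A p x ∧ A x q)) :
    (l.map (arcCount A x)).sum ≤ l.length + 1 := by
  classical
  have key : ∀ (l : List V) (p : V), (p :: l).IsChain (fun p q => ¬ (A p x ∧ A x q)) →
      ((p :: l).map (arcCount A x)).sum ≤ l.length + 1 + (if A x p then 1 else 0) := by
    intro l
    induction l with
    | nil => intro p _; simp only [arcCount, List.map_cons, List.map_nil, List.sum_cons,
        List.sum_nil, List.length_nil]; split_ifs <;> omega
    | cons q l ih =>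
      intro p hp
      rw [List.isChain_cons_cons] at hp
      have := ih q hp.2
      have h1 := hp.1
      rw [List.map_cons, List.sum_cons, List.length_cons]
      have h2 : arcCount A x p = (if A x p then 1 else 0) + (if A p x then 1 else 0) := by
        simp [arcCount]
      rw [h2]
      by_cases hpx : A p x
      · have : ¬ A x q := fun h => h1 ⟨hpx, h⟩
        simp_all; omega
      · simp only [hpx, if_false]
        split_ifs at * <;> omega
  cases l with
  | nil => simp
  | cons p l =>
    have := key l p h
    rw [List.length_cons]
    split_ifs at this <;> omega

lemma exists_insertion {x : V} {l : List V}
    (h : ¬ l.IsChain fun p q => ¬ (A p x ∧ A x q)) :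
    ∃ p q l₁ l₂, l = l₁ ++ p :: q :: l₂ ∧ A p x ∧ A x q := by
  rw [List.isChain_iff_forall_rel_of_append_cons_cons] at h
  push Not at h
  obtain ⟨p, q, l₁, l₂, h, h'⟩ := h
  exact ⟨p, q, l₁, l₂, h, h'⟩

lemma cycle_chain_append {R p : List V} {u v a b : V} (hR : R.IsChain A) (hp : p.IsChain A)
    (hv : R.head? = some v) (hu : R.getLast? = some u) (ha : p.head? = some a)
    (hb : p.getLast? = some b) (hua : A u a) (hbv : A b v) :
    Cycle.Chain A ((R ++ p : List V) : Cycle V) := by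
  obtain ⟨r, rfl⟩ := List.head?_eq_some_iff.1 hv
  rw [List.cons_append, Cycle.chain_coe_cons, List.append_assoc, ← List.cons_append,
    List.isChain_append, List.isChain_append]
  refine ⟨hR, ⟨hp, by simp, ?_⟩, ?_⟩
  · simp [hb, hbv]
  · simp [hu, ha, hua]

lemma IsCycleList.isChain_left {R Q : List V} (h : IsCycleList A (R ++ Q)) : R.IsChain A := by
  cases R with
  | nil => simp
  | cons v r =>
    rcases h.2 with h | h
    · have : r = [] := by
        rw [List.cons_append, List.length_cons, List.length_append] at h
        exact List.length_eq_zero_iff.1 (by omega)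
      simp [this]
    · rw [List.cons_append, Cycle.chain_coe_cons, List.append_assoc, ← List.cons_append] at h
      exact h.left_of_append

lemma IsCycleList.rotate {R Q : List V} (h : IsCycleList A (R ++ Q)) :
    IsCycleList A (Q ++ R) := by
  refine ⟨List.nodup_append_comm.1 h.1, ?_⟩
  have : ((Q ++ R : List V) : Cycle V) = (R ++ Q : List V) :=
    Cycle.coe_eq_coe.2 List.isRotated_append
  rw [this, List.length_append, add_comm, ← List.length_append]
  exact h.2

/-- A vertex outside a cycle can be inserted between two consecutive vertices joined to it. -/
lemma IsCycleList.insert {l₁ l₂ : List V} {p q a : V}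
    (h : IsCycleList A (l₁ ++ p :: q :: l₂)) (ha : a ∉ l₁ ++ p :: q :: l₂)
    (hpa : A p a) (haq : A a q) :
    IsCycleList A ((q :: l₂ ++ l₁ ++ [p]) ++ [a]) := by
  have h' : IsCycleList A ((q :: l₂ ++ l₁ ++ [p]) ++ []) := by
    have := IsCycleList.rotate (R := l₁ ++ [p]) (Q := q :: l₂) (by simpa using h)
    simpa using this
  refine ⟨?_, Or.inr ?_⟩
  · have := h'.1
    rw [List.append_nil] at this
    refine List.Nodup.append this (by simp) ?_
    simp only [List.disjoint_singleton]
    intro hm; apply ha; simp at hm ⊢; tauto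
  · exact cycle_chain_append h'.isChain_left (p := [a]) (by simp) (v := q) (u := p)
      (by simp) List.getLast?_concat rfl rfl hpa haq

lemma exists_nodup_path {S : Set V} {a b : V} (ha : a ∉ S) (h : ReachIn A Sᶜ a b) :
    ∃ p : List V, p.head? = some a ∧ p.getLast? = some b ∧ p.Nodup ∧ p.IsChain A ∧
      ∀ w ∈ p, w ∉ S := by
  induction h using Relation.ReflTransGen.head_induction_on with
  | refl => exact ⟨[b], by simpa using ha⟩
  | @head a c hac _ ih =>
    obtain ⟨p, h1, h2, h3, h4, h5⟩ := ih hac.2.1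
    by_cases hap : a ∈ p
    · obtain ⟨s, t, rfl⟩ := List.append_of_mem hap
      refine ⟨a :: t, rfl, ?_, h3.of_append_right, h4.right_of_append,
        fun w hw => h5 w (List.mem_append_right _ hw)⟩
      rw [← h2, List.getLast?_append_cons]
    · refine ⟨a :: p, rfl, ?_, List.nodup_cons.2 ⟨hap, h3⟩, ?_, ?_⟩
      · obtain ⟨t, rfl⟩ := List.head?_eq_some_iff.1 h1
        rw [List.getLast?_cons_cons, h2]
      · obtain ⟨t, rfl⟩ := List.head?_eq_some_iff.1 h1
        exact List.isChain_cons_cons.2 ⟨hac.2.2, h4⟩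
      · simpa using ⟨ha, h5⟩

lemma exists_last_exit {S : Set V} {x z : V} (hx : x ∈ S) (hz : z ∉ S)
    (h : Relation.ReflTransGen A x z) :
    ∃ u ∈ S, ∃ a, a ∉ S ∧ A u a ∧ ReachIn A Sᶜ a z := by
  have key : (x ∉ S ∧ ReachIn A Sᶜ x z) ∨
      ∃ u ∈ S, ∃ a, a ∉ S ∧ A u a ∧ ReachIn A Sᶜ a z := by
    clear hx
    induction h using Relation.ReflTransGen.head_induction_on with
    | refl => exact Or.inl ⟨hz, .refl⟩
    | @head a c hac _ ih =>
      rcases ih with ⟨h1, h2⟩ | h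
      · by_cases ha : a ∈ S
        · exact Or.inr ⟨a, ha, c, h1, hac, h2⟩
        · exact Or.inl ⟨ha, .head ⟨ha, h1, hac⟩ h2⟩
      · exact Or.inr h
  exact key.resolve_left fun h => h.1 hx

lemma exists_first_entrance {S : Set V} {x z : V} (hx : x ∈ S) (hz : z ∉ S)
    (h : Relation.ReflTransGen A z x) :
    ∃ v ∈ S, ∃ b, ReachIn A Sᶜ z b ∧ A b v := by
  have key : (x ∉ S ∧ ReachIn A Sᶜ z x) ∨ ∃ v ∈ S, ∃ b, ReachIn A Sᶜ z b ∧ A b v := by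
    clear hx
    induction h with
    | refl => exact Or.inl ⟨hz, .refl⟩
    | @tail a c _ hac ih =>
      rcases ih with ⟨h1, h2⟩ | h
      · by_cases hc : c ∈ S
        · exact Or.inr ⟨c, hc, a, h2, hac⟩
        · exact Or.inl ⟨hc, .tail h2 ⟨h1, hc, hac⟩⟩
      · exact Or.inr h
  exact key.resolve_left fun h => h.1 hx

lemma IsStrong.exists_detour {S : Set V} (hA : IsStrong A) {x z : V} (hx : x ∈ S) (hz : z ∉ S) :
    ∃ u ∈ S, ∃ v ∈ S, Detour A S u v := by
  obtain ⟨u, hu, a, ha, hua, haz⟩ := exists_last_exit hx hz (hA x z)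
  obtain ⟨v, hv, b, hzb, hbv⟩ := exists_first_entrance hx hz (hA z x)
  exact ⟨u, hu, v, hv, a, b, ha, hua, haz.trans hzb, hbv⟩

/-- Any two (possibly equal) vertices `u`, `v` of a cycle are the ends of a segment `R`,
running from `v` to `u`. -/
lemma IsCycleList.exists_segment {c : List V} (hc : IsCycleList A c) {u v : V}
    (hu : u ∈ c) (hv : v ∈ c) :
    ∃ R Q : List V, IsCycleList A (R ++ Q) ∧ (R ++ Q).Perm c ∧
      R.head? = some v ∧ R.getLast? = some u := by
  obtain ⟨s, t, rfl⟩ := List.append_of_mem hu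
  have h1 := hc.rotate
  have hperm : (u :: t ++ s).Perm (s ++ u :: t) := List.perm_append_comm
  rw [List.cons_append] at h1 hperm
  rw [← hperm.mem_iff, List.mem_cons] at hv
  rcases hv with rfl | hv
  · exact ⟨[v], t ++ s, h1, hperm, rfl, rfl⟩
  · generalize t ++ s = w at *
    obtain ⟨q, r, rfl⟩ := List.append_of_mem hv
    refine ⟨v :: r ++ [u], q, ?_, ?_, by simp, List.getLast?_concat⟩
    · have := IsCycleList.rotate (R := u :: q) (Q := v :: r) (by simpa using h1)
      simpa using this
    · refine List.Perm.trans ?_ hperm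
      have := List.perm_append_comm (l₁ := u :: q) (l₂ := v :: r)
      simpa using this.symm

lemma degree_add_degree_lt [Fintype V] [DecidableEq V] {S T T' : Finset V} {a y : V}
    (hirr : ∀ x, ¬ A x x) (hTT' : T ⊆ T') (hT'S : T' ⊆ S) (ha : a ∉ S) (hyS : y ∈ S)
    (hyT' : y ∉ T')
    (hay : ∀ w ∈ S \ T, ¬ A a w ∧ ¬ A w a)
    (hw : ∀ w ∉ S, ¬ (A a w ∧ A w y) ∧ ¬ (A y w ∧ A w a))
    (haT : ∑ w ∈ T, arcCount A a w ≤ T.card + 1)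
    (hyT : ∑ w ∈ T', arcCount A y w ≤ T'.card + 1) :
    degree A a + degree A y < 2 * Fintype.card V := by
  have hyST : y ∈ S \ T := Finset.mem_sdiff.2 ⟨hyS, fun h => hyT' (hTT' h)⟩
  have e1 : ∑ w ∈ S, arcCount A a w = ∑ w ∈ T, arcCount A a w := by
    refine (Finset.sum_subset (hTT'.trans hT'S) fun w h1 h2 => ?_).symm
    have := hay w (Finset.mem_sdiff.2 ⟨h1, h2⟩)
    exact arcCount_eq_zero this.1 this.2
  have e2 := Finset.sum_sdiff hT'S (f := arcCount A y)
  have hy : y ∈ S \ T' := Finset.mem_sdiff.2 ⟨hyS, hyT'⟩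
  have e3 : ∑ w ∈ S \ T', arcCount A y w ≤ 2 * ((S \ T').card - 1) := by
    rw [← Finset.add_sum_erase _ _ hy, arcCount_eq_zero (hirr y) (hirr y), zero_add,
      ← Finset.card_erase_of_mem hy, mul_comm, ← smul_eq_mul]
    exact Finset.sum_le_card_nsmul _ _ _ fun w _ => arcCount_le_two y w
  have ha' : a ∈ Sᶜ := Finset.mem_compl.2 ha
  have e4 : ∑ w ∈ Sᶜ, (arcCount A a w + arcCount A y w) ≤ 2 * (Sᶜ.card - 1) := by
    rw [← Finset.add_sum_erase _ _ ha', arcCount_eq_zero (hirr a) (hirr a),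
      arcCount_eq_zero (hay y hyST).2 (hay y hyST).1, zero_add, zero_add,
      ← Finset.card_erase_of_mem ha', mul_comm, ← smul_eq_mul]
    refine Finset.sum_le_card_nsmul _ _ _ fun w h => ?_
    have := hw w (Finset.mem_compl.1 (Finset.mem_of_mem_erase h))
    exact arcCount_add_le_two this.1 this.2
  rw [Finset.sum_add_distrib] at e4
  have e5 := Finset.sum_add_sum_compl S (arcCount A a)
  have e6 := Finset.sum_add_sum_compl S (arcCount A y)
  have c1 := Finset.card_add_card_compl S
  have c2 := Finset.card_sdiff_add_card_eq_card hT'S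
  have c3 := Finset.card_le_card hTT'
  have c4 := Finset.card_pos.2 ⟨y, hy⟩
  have c5 := Finset.card_pos.2 ⟨a, ha'⟩
  rw [degree_eq_sum_arcCount, degree_eq_sum_arcCount]
  omega

/-- Either all vertices of `Q` can be inserted into the path `R`, keeping its ends, or some
longest extension `R'` of `R` by vertices of `Q` misses a vertex `y` that it cannot absorb. -/
lemma exists_maximal_insertion {R Q : List V} {u v : V} (hRQ : (R ++ Q).Nodup)
    (hR : R.IsChain A) (hv : R.head? = some v) (hu : R.getLast? = some u) :
    ∃ R' : List V, R'.Nodup ∧ R'.IsChain A ∧ R'.head? = some v ∧ R'.getLast? = some u ∧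
      R ⊆ R' ∧ R' ⊆ R ++ Q ∧
      ∀ y ∈ Q, y ∉ R' → R'.IsChain fun p q => ¬ (A p y ∧ A y q) := by
  let P : List V → Prop := fun R' => R'.Nodup ∧ R'.IsChain A ∧ R'.head? = some v ∧
    R'.getLast? = some u ∧ R ⊆ R' ∧ R' ⊆ R ++ Q
  have hbound : ∀ R', P R' → R'.length ≤ (R ++ Q).length := fun R' h =>
    (h.1.subperm h.2.2.2.2.2).length_le
  have hP : P R := ⟨hRQ.of_append_left, hR, hv, hu, List.Subset.refl _,
    List.subset_append_left _ _⟩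
  classical
  obtain ⟨R', hR', hlen⟩ := Nat.findGreatest_spec
    (P := fun k => ∃ R', P R' ∧ R'.length = k) (hbound R hP) ⟨R, hP, rfl⟩
  have hmax : ∀ R'', P R'' → R''.length ≤ R'.length := fun R'' h => by
    rw [hlen]
    exact Nat.le_findGreatest (hbound R'' h) ⟨R'', h, rfl⟩
  obtain ⟨h1, h2, h3, h4, h5, h6⟩ := hR'
  refine ⟨R', h1, h2, h3, h4, h5, h6, fun y hyQ hyR' => ?_⟩
  by_contra hcon
  obtain ⟨p, q, l₁, l₂, rfl, hpy, hyq⟩ := exists_insertion hcon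
  have hperm : (l₁ ++ p :: y :: q :: l₂).Perm (y :: (l₁ ++ p :: q :: l₂)) := by
    have := List.perm_middle (a := y) (l₁ := l₁ ++ [p]) (l₂ := q :: l₂)
    simpa using this
  have hPnew : P (l₁ ++ p :: y :: q :: l₂) := by
    refine ⟨hperm.nodup_iff.2 (List.nodup_cons.2 ⟨hyR', h1⟩), ?_, ?_, ?_, ?_, ?_⟩
    · simp only [List.isChain_append, List.isChain_cons_cons] at h2 ⊢
      exact ⟨h2.1, ⟨hpy, hyq, h2.2.1.2⟩, h2.2.2⟩
    · rw [← h3]; cases l₁ <;> simp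
    · rw [← h4]; simp [List.getLast?_append, List.getLast?_cons_cons]
    · exact fun w hw => hperm.mem_iff.2 (List.mem_cons_of_mem _ (h5 hw))
    · intro w hw
      rcases List.mem_cons.1 (hperm.mem_iff.1 hw) with rfl | hw
      · exact List.mem_append_right _ hyQ
      · exact h6 hw
  have := hmax _ hPnew
  simp at this

/-- A cycle list of maximal length is spanning. -/
lemma IsCycleList.mem_of_maximal [Fintype V] [DecidableEq V] (hirr : ∀ x, ¬ A x x)
    (hstrong : IsStrong A) (hdeg : ∀ x, Fintype.card V ≤ degree A x) {c : List V}
    (hc : IsCycleList A c) (hne : c ≠ [])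
    (hmax : ∀ c', IsCycleList A c' → c'.length ≤ c.length) (z : V) : z ∈ c := by
  by_contra hz
  obtain ⟨x, hx⟩ := List.exists_mem_of_ne_nil c hne
  -- among all cycles of maximal length with a detour, choose one minimizing the bypassed part
  let P : ℕ → Prop := fun k => ∃ (R Q : List V) (u v : V), Q.length = k ∧
    IsCycleList A (R ++ Q) ∧ (R ++ Q).length = c.length ∧ R.head? = some v ∧
    R.getLast? = some u ∧ Detour A {w | w ∈ R ++ Q} u v
  have hex : ∃ k, P k := by
    obtain ⟨u, hu, v, hv, hd⟩ := hstrong.exists_detour (S := {w | w ∈ c}) hx hz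
    obtain ⟨R, Q, h1, h2, h3, h4⟩ := hc.exists_segment hu hv
    refine ⟨Q.length, R, Q, u, v, rfl, h1, h2.length_eq, h3, h4, ?_⟩
    convert hd using 3
    exact h2.mem_iff
  classical
  obtain ⟨R, Q, u, v, hk, hcyc, hlen, hv, hu, a, b, ha, hua, hab, hbv⟩ := Nat.find_spec hex
  have hmin : ∀ k, P k → Q.length ≤ k := fun k h => hk ▸ Nat.find_min' hex h
  have no_from_u : ∀ y ∈ Q, ¬ Detour A {w | w ∈ R ++ Q} u y := by
    intro y hy hd
    obtain ⟨q₁, q₂, rfl⟩ := List.append_of_mem hy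
    have hr := IsCycleList.rotate (R := R ++ q₁) (Q := y :: q₂) (by simpa using hcyc)
    have := hmin q₁.length ⟨y :: q₂ ++ R, q₁, u, y, rfl, by simpa using hr, ?_, by simp,
      by rw [List.getLast?_append, hu]; rfl, ?_⟩
    · simp at this
    · rw [← hlen]; simp only [List.length_append, List.length_cons]; omega
    · convert hd using 3
      simp only [List.mem_append, List.mem_cons]; tauto
  have no_to_v : ∀ y ∈ Q, ¬ Detour A {w | w ∈ R ++ Q} y v := by
    intro y hy hd
    obtain ⟨q₁, q₂, rfl⟩ := List.append_of_mem hy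
    have := hmin q₂.length ⟨R ++ q₁ ++ [y], q₂, y, v, rfl, by simpa using hcyc, ?_,
      by simp [List.head?_append, hv], by simp, by simpa using hd⟩
    · simp at this; omega
    · rw [← hlen]; simp
  have haR : R.IsChain fun p q => ¬ (A p a ∧ A a q) := by
    by_contra hcon
    obtain ⟨p, q, l₁, l₂, rfl, hpa, haq⟩ := exists_insertion hcon
    have := hmax _ (IsCycleList.insert (l₁ := l₁) (l₂ := l₂ ++ Q) (a := a)
      (by simpa using hcyc) (by simpa using ha) hpa haq)
    rw [← hlen] at this
    simp only [List.length_append, List.length_cons, List.length_nil] at this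
    omega
  obtain ⟨R', hn, hch, hv', hu', hRR', hR'RQ, hins⟩ :=
    exists_maximal_insertion hcyc.1 hcyc.isChain_left hv hu
  have hy : ∃ y ∈ Q, y ∉ R' := by
    by_contra! hcon
    obtain ⟨p, hpa, hpb, hpn, hpc, hpS⟩ := exists_nodup_path ha hab
    have hle : (R ++ Q).length ≤ R'.length := by
      refine (hcyc.1.subperm fun w hw => ?_).length_le
      rcases List.mem_append.1 hw with h | h
      exacts [hRR' h, hcon w h]
    have := hmax (R' ++ p) ⟨hn.append hpn fun w h1 h2 => hpS w h2 (hR'RQ h1),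
      Or.inr (cycle_chain_append hch hpc hv' hu' hpa hpb hua hbv)⟩
    have hp0 : 0 < p.length := by
      obtain ⟨t, rfl⟩ := List.head?_eq_some_iff.1 hpa
      simp
    rw [List.length_append] at this
    omega
  obtain ⟨y, hyQ, hyR'⟩ := hy
  have hlt := degree_add_degree_lt (A := A) (S := (R ++ Q).toFinset) (T := R.toFinset)
    (T' := R'.toFinset) (a := a) (y := y) hirr (fun w => by simpa using @hRR' w)
    (fun w => by simpa using @hR'RQ w) (by simpa using ha) (by simp [hyQ]) (by simpa using hyR')
    (fun w hw => ?_) (fun w hw => ?_) ?_ ?_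
  · have := hdeg a
    have := hdeg y
    omega
  · have hwQ : w ∈ Q := by simp at hw; tauto
    exact ⟨fun h => no_from_u w hwQ ⟨a, a, ha, hua, .refl, h⟩,
      fun h => no_to_v w hwQ ⟨a, b, ha, h, hab, hbv⟩⟩
  · rw [List.mem_toFinset] at hw
    exact ⟨fun h => no_from_u y hyQ ⟨a, w, ha, hua, .single ⟨ha, hw, h.1⟩, h.2⟩,
      fun h => no_to_v y hyQ ⟨w, b, hw, h.1, .head ⟨hw, ha, h.2⟩ hab, hbv⟩⟩
  · rw [List.sum_toFinset _ hcyc.1.of_append_left,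
      List.toFinset_card_of_nodup hcyc.1.of_append_left]
    exact sum_arcCount_le_of_not_insertable haR
  · rw [List.sum_toFinset _ hn, List.toFinset_card_of_nodup hn]
    exact sum_arcCount_le_of_not_insertable (hins y hyQ hyR')

lemma isHamiltonian_of_spanning_cycle [Fintype V] {c : List V} (hnodup : c.Nodup)
    (hc : Cycle.Chain A (c : Cycle V)) (hspan : ∀ z, z ∈ c) (hn : 2 ≤ Fintype.card V) :
    IsHamiltonian A := by
  classical
  have hlen : c.length = Fintype.card V := by
    rw [← List.toFinset_card_of_nodup hnodup, Finset.card_eq_iff_eq_univ]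
    ext z; simp [hspan z]
  unfold IsHamiltonian
  rw [← hlen] at hn ⊢
  refine ⟨c.get, ⟨hn, List.nodup_iff_injective_get.1 hnodup, ?_⟩, fun z =>
    List.mem_iff_get.1 (hspan z)⟩
  rintro ⟨i, hi⟩
  obtain ⟨x, l, rfl⟩ := List.exists_cons_of_length_pos (l := c) (by omega)
  replace hc : ((x :: l) ++ [x]).IsChain A := by simpa using hc
  rw [List.isChain_iff_getElem] at hc
  have := hc i (by simpa using hi)
  rw [List.getElem_append_left hi] at this
  by_cases hil : i + 1 < (x :: l).length
  · rw [List.getElem_append_left hil] at this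
    simpa only [List.get_eq_getElem, Nat.mod_eq_of_lt hil] using this
  · have hil' : i + 1 = (x :: l).length := by omega
    rw [List.getElem_append_right (by omega)] at this
    simpa [hil'] using this

end GhouilaHouri

/-- Ghouila-Houri: a strong digraph of order `n ≥ 2` in which every vertex has
degree at least `n` is Hamiltonian. -/
theorem statement10 {V : Type*} [Fintype V] [DecidableEq V] (A : V → V → Prop)
    (hirr : Irreflexive A)
    (n : ℕ) (hn2 : 2 ≤ n) (hcard : Fintype.card V = n)
    (hstrong : IsStrong A)
    (hdeg : ∀ x : V, n ≤ degree A x) :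
    IsHamiltonian A := by
  classical
  subst hcard
  have hne : Nonempty V := Fintype.card_pos_iff.1 (by omega)
  let P : ℕ → Prop := fun k => ∃ c : List V, IsCycleList A c ∧ c.length = k
  have hbound : ∀ c : List V, IsCycleList A c → c.length ≤ Fintype.card V := fun c h =>
    h.1.length_le_card
  have hone : P 1 := ⟨[hne.some], ⟨by simp, Or.inl rfl⟩, rfl⟩
  obtain ⟨c, hc, hlen⟩ := Nat.findGreatest_spec (P := P) (n := Fintype.card V) (by omega) hone
  have hmax : ∀ c', IsCycleList A c' → c'.length ≤ c.length := fun c' h => by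
    rw [hlen]
    exact Nat.le_findGreatest (hbound c' h) ⟨c', h, rfl⟩
  have hpos : 1 ≤ c.length := hmax [hne.some] ⟨by simp, Or.inl rfl⟩
  have hspan := hc.mem_of_maximal hirr hstrong hdeg (List.length_pos_iff.1 hpos) hmax
  refine isHamiltonian_of_spanning_cycle hc.1 (hc.2.resolve_left fun h1 => ?_) hspan hn2
  have : (Finset.univ : Finset V).card ≤ c.toFinset.card :=
    Finset.card_le_card fun z _ => List.mem_toFinset.2 (hspan z)
  have := c.toFinset_card_le
  rw [Finset.card_univ] at *
  omega
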